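/- There exists an absolute constant C such that for every n ≥ 2 and every f ∈ L^1[0,1), the Riesz logarithmic mean satisfies ‖f ∗ G_n‖_{L^1[0,1)} ≤ C ‖f‖_{L^1[0,1)}; that is, the operators f ↦ f ∗ G_n are uniformly of strong type (1,1). -/

import Mathlib

open MeasureTheory Filter

noncomputable section

/-- The unit cube `[0,1)^d`. -/
def unitCube (d : ℕ) : Set (Fin d → ℝ) := Set.univ.pi fun _ => Set.Ico (0:ℝ) 1

/-- Lebesgue measure restricted to the unit cube `[0,1)^d`. -/
def cubeMeasure (d : ℕ) : Measure (Fin d → ℝ) := volume.restrict (unitCube d)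

/-- The `1`-periodic function equal to `1` on `[0,1/2)` and to `-1` on `[1/2,1)`. -/
def r0 (x : ℝ) : ℝ := if Int.fract x < 1/2 then 1 else -1

/-- The Rademacher functions. -/
def rademacher (n : ℕ) (x : ℝ) : ℝ := r0 (2 ^ n * x)

/-- The Walsh functions (in Paley enumeration, via binary digits). -/
def walsh (n : ℕ) (x : ℝ) : ℝ :=
  ∏ k ∈ Finset.range (n + 1), if n.testBit k then rademacher k x else 1

/-- The Walsh–Dirichlet kernel `D_n`. -/
def dirichletKernel (n : ℕ) (x : ℝ) : ℝ := ∑ k ∈ Finset.range n, walsh k x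

/-- `l_n = ∑_{k=1}^{n-1} 1/k`. -/
def logSum (n : ℕ) : ℝ := ∑ k ∈ Finset.Icc 1 (n - 1), (1 : ℝ) / k

/-- The Nörlund logarithmic kernel `F_n`. -/
def FKernel (n : ℕ) (u : ℝ) : ℝ :=
  (1 / logSum n) * ∑ i ∈ Finset.Ico 1 n, dirichletKernel (n - i) u / i

/-- The Riesz logarithmic kernel `G_n`. -/
def GKernel (n : ℕ) (u : ℝ) : ℝ :=
  (1 / logSum n) * ∑ i ∈ Finset.Ico 1 n, dirichletKernel i u / i

/-- Walsh–Fourier coefficient of `f` on the unit cube. -/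
def walshCoef {d : ℕ} (f : (Fin d → ℝ) → ℝ) (j : Fin d → ℕ) : ℝ :=
  ∫ x, f x * ∏ i, walsh (j i) (x i) ∂(cubeMeasure d)

/-- Rectangular partial sums of the multiple Walsh–Fourier series. -/
def rectPartialSum {d : ℕ} (f : (Fin d → ℝ) → ℝ) (N : Fin d → ℕ) (x : Fin d → ℝ) : ℝ :=
  ∑ j ∈ Fintype.piFinset (fun i => Finset.range (N i)),
    walshCoef f j * ∏ i, walsh (j i) (x i)

/-- The mixed logarithmic means `(L_{n_B} ∘ R_{n_{B'}})(f)`. -/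
def mixedLogMean {d : ℕ} (B : Finset (Fin d)) (f : (Fin d → ℝ) → ℝ)
    (n : Fin d → ℕ) (x : Fin d → ℝ) : ℝ :=
  (∏ j, logSum (n j))⁻¹ *
    ∑ i ∈ Fintype.piFinset (fun j => Finset.Ico 1 (n j)),
      rectPartialSum f (fun j => if j ∈ B then n j - i j else i j) x / ∏ j, (i j : ℝ)

/-- A Young function: convex, continuous, even, vanishing at `0`, with
`Q(u)/u → ∞` at `+∞` and `Q(u)/u → 0` at `0`. -/
structure YoungFunction where
  toFun : ℝ → ℝ
  nonneg : ∀ u, 0 ≤ toFun u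
  convexOn : ConvexOn ℝ Set.univ toFun
  continuous : Continuous toFun
  even : ∀ u, toFun (-u) = toFun u
  map_zero : toFun 0 = 0
  tendsto_atTop : Tendsto (fun u => toFun u / u) atTop atTop
  tendsto_zero : Tendsto (fun u => toFun u / u) (nhdsWithin 0 {(0:ℝ)}ᶜ) (nhds 0)

/-- The set of admissible constants `k` in the Luxemburg norm of `f`. -/
def orliczSet {d : ℕ} (Q : YoungFunction) (f : (Fin d → ℝ) → ℝ) : Set ℝ :=
  {k | 0 < k ∧ Integrable (fun x => Q.toFun (|f x| / k)) (cubeMeasure d) ∧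
    ∫ x, Q.toFun (|f x| / k) ∂(cubeMeasure d) ≤ 1}

/-- `f` belongs to the Orlicz space `L_Q(I^d)`. -/
def MemOrlicz {d : ℕ} (Q : YoungFunction) (f : (Fin d → ℝ) → ℝ) : Prop :=
  Measurable f ∧ (orliczSet Q f).Nonempty

/-- The Luxemburg norm on the Orlicz space `L_Q(I^d)`. -/
def orliczNorm {d : ℕ} (Q : YoungFunction) (f : (Fin d → ℝ) → ℝ) : ℝ :=
  sInf (orliczSet Q f)

/-- `p_n = 2^{2n} + 2^{2n-2} + ⋯ + 2^0`. -/
def pIdx (n : ℕ) : ℕ := ∑ k ∈ Finset.range (n + 1), 4 ^ k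

/-- `m̃ = ⌊ l_{p_{⌊m/2⌋}-1}/16 - 2^15 ⌋`. -/
def mTilde (m : ℕ) : ℤ := ⌊logSum (pIdx (m / 2) - 1) / 16 - 2 ^ 15⌋

/-- `m₀ = min{m : m̃ > 1}`. -/
def m₀ : ℕ := sInf {m : ℕ | 1 < mTilde m}

/-- The set `Ω_n`. -/
def Omega (n : ℕ) : Set ℝ :=
  ⋃ m ∈ Finset.Icc n (2 * n),
    Set.Ico ((2:ℝ) ^ (-(m:ℤ) - 1) + (2:ℝ) ^ (-(m:ℤ) - mTilde m)) ((2:ℝ) ^ (-(m:ℤ)))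

/-- `k`-th binary digit of `x` (the expansion not terminating in `1`'s). -/
def binDigit (k : ℕ) (x : ℝ) : ℕ := (⌊x * 2 ^ (k + 1)⌋).toNat % 2

/-- Dyadic addition on `[0,1)`. -/
def dyadicAdd (x t : ℝ) : ℝ :=
  ∑' k : ℕ, |(binDigit k x : ℝ) - (binDigit k t : ℝ)| / 2 ^ (k + 1)

/-- Dyadic convolution `f ∗ K` on `[0,1)`. -/
def dyadicConv (f K : ℝ → ℝ) (x : ℝ) : ℝ :=
  ∫ t in Set.Ico (0:ℝ) 1, f t * K (dyadicAdd x t)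

/-- Lebesgue measure restricted to `[0,1)`. -/
def unitMeasure : Measure ℝ := volume.restrict (Set.Ico (0:ℝ) 1)

/-- A set `A ⊆ L_Q(I^d)` is nowhere dense w.r.t. the Luxemburg norm. -/
def OrliczNowhereDense {d : ℕ} (Q : YoungFunction) (A : Set ((Fin d → ℝ) → ℝ)) : Prop :=
  ∀ f, MemOrlicz Q f → ∀ ε > 0, ∃ g, MemOrlicz Q g ∧ ∃ δ > 0,
    (∀ h, MemOrlicz Q h → orliczNorm Q (h - g) < δ → orliczNorm Q (h - f) < ε) ∧
    (∀ h, MemOrlicz Q h → orliczNorm Q (h - g) < δ → h ∉ A)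

/-- A set `A ⊆ L_Q(I^d)` is of first Baire category (meager) w.r.t. the Luxemburg norm. -/
def OrliczMeager {d : ℕ} (Q : YoungFunction) (A : Set ((Fin d → ℝ) → ℝ)) : Prop :=
  ∃ F : ℕ → Set ((Fin d → ℝ) → ℝ), (∀ k, OrliczNowhereDense Q (F k)) ∧ A ⊆ ⋃ k, F k

lemma rad_eq (k : ℕ) (x : ℝ) :
    rademacher k x = if ⌊(2:ℝ) ^ (k+1) * x⌋ % 2 = 0 then 1 else -1 := by
  unfold rademacher r0
  have h : (2:ℝ) ^ (k+1) * x = 2 * (2 ^ k * x) := by ring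
  rw [h]
  generalize (2:ℝ) ^ k * x = y
  have hy := Int.floor_add_fract y
  have h0 := Int.fract_nonneg y
  have h1 := Int.fract_lt_one y
  by_cases hc : Int.fract y < 1/2
  · have : ⌊2 * y⌋ = 2 * ⌊y⌋ := by
      rw [Int.floor_eq_iff]; push_cast; constructor <;> linarith
    rw [if_pos hc, this, if_pos (by omega)]
  · have : ⌊2 * y⌋ = 2 * ⌊y⌋ + 1 := by
      rw [Int.floor_eq_iff]; push_cast; constructor <;> linarith
    rw [if_neg hc, this, if_neg (by omega)]

lemma rad_sq (k : ℕ) (x : ℝ) : rademacher k x = 1 ∨ rademacher k x = -1 := by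
  rw [rad_eq]; split_ifs <;> simp

lemma rad_meas (k : ℕ) : Measurable (rademacher k) := by
  have : rademacher k = fun x => if ⌊(2:ℝ) ^ (k+1) * x⌋ % 2 = 0 then (1:ℝ) else -1 :=
    funext (rad_eq k)
  rw [this]
  have hf : Measurable fun x : ℝ => ⌊(2:ℝ) ^ (k+1) * x⌋ := by fun_prop
  exact (measurable_of_countable (fun z : ℤ => if z % 2 = 0 then (1:ℝ) else -1)).comp hf

lemma walsh_eq (n N : ℕ) (h : n < 2 ^ N) (x : ℝ) :
    walsh n x = ∏ k ∈ Finset.range N, if n.testBit k then rademacher k x else 1 := by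
  unfold walsh
  have key : ∀ A B : ℕ, A ≤ B → n < 2 ^ A →
      (∏ k ∈ Finset.range B, if n.testBit k then rademacher k x else 1) =
      ∏ k ∈ Finset.range A, if n.testBit k then rademacher k x else 1 := by
    intro A B hAB hA
    symm
    apply Finset.prod_subset
    · intro a; simp; omega
    · intro k _ hk
      simp at hk
      rw [Nat.testBit_lt_two_pow (lt_of_lt_of_le hA (Nat.pow_le_pow_right (by norm_num) hk))]
      simp
  have h2 : n < 2 ^ (n+1) := lt_trans (Nat.lt_succ_self n) Nat.lt_two_pow_self
  rcases le_total N (n+1) with h1 | h1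
  · exact key _ _ h1 h
  · exact (key _ _ h1 h2).symm

lemma walsh_add (m j : ℕ) (h : j < 2 ^ m) (x : ℝ) :
    walsh (2 ^ m + j) x = rademacher m x * walsh j x := by
  rw [walsh_eq (2 ^ m + j) (m+1) (by rw [pow_succ]; omega), walsh_eq j m h,
    Finset.prod_range_succ, mul_comm]
  congr 1
  · rw [Nat.testBit_two_pow_add_eq, Nat.testBit_lt_two_pow h]; simp
  · apply Finset.prod_congr rfl
    intro k hk
    rw [Nat.testBit_two_pow_add_gt (by simpa using hk)]

lemma walsh_meas (n : ℕ) : Measurable (walsh n) := by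
  unfold walsh
  apply Finset.measurable_fun_prod
  intro k _
  split_ifs
  · exact rad_meas k
  · exact measurable_const

lemma walsh_abs (n : ℕ) (x : ℝ) : |walsh n x| = 1 := by
  unfold walsh
  rw [Finset.abs_prod]
  apply Finset.prod_eq_one
  intro k _
  split_ifs
  · rcases rad_sq k x with h | h <;> simp [h]
  · simp

lemma rad_dep {k m : ℕ} (h : k < m) {x y : ℝ} (hxy : ⌊(2:ℝ) ^ m * x⌋ = ⌊(2:ℝ) ^ m * y⌋) :
    rademacher k x = rademacher k y := by
  obtain ⟨d, rfl⟩ : ∃ d, m = k + 1 + d := ⟨m - (k+1), by omega⟩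
  have key : ∀ z : ℝ, ⌊(2:ℝ) ^ (k+1) * z⌋ = ⌊(2:ℝ) ^ (k+1+d) * z⌋ / ((2 ^ d : ℕ) : ℤ) := by
    intro z
    rw [← Int.floor_div_natCast]
    congr 1
    push_cast
    rw [pow_add _ (k+1) d]
    field_simp
  rw [rad_eq, rad_eq, key, key, hxy]

lemma walsh_dep {n m : ℕ} (h : n < 2 ^ m) {x y : ℝ} (hxy : ⌊(2:ℝ) ^ m * x⌋ = ⌊(2:ℝ) ^ m * y⌋) :
    walsh n x = walsh n y := by
  rw [walsh_eq n m h, walsh_eq n m h]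
  apply Finset.prod_congr rfl
  intro k hk
  rw [rad_dep (by simpa using hk) hxy]

/-- twisted functions -/
def VV (t : ℝ) (k : ℕ) (x : ℝ) : ℝ := walsh k x * walsh k t
def DD (t : ℝ) (n : ℕ) (x : ℝ) : ℝ := ∑ k ∈ Finset.range n, VV t k x
def SS (t : ℝ) (n : ℕ) (x : ℝ) : ℝ := ∑ k ∈ Finset.range (n+1), DD t k x
def rho (t : ℝ) (m : ℕ) (x : ℝ) : ℝ := rademacher m x * rademacher m t

lemma DD_add (t x : ℝ) (m j : ℕ) (h : j ≤ 2 ^ m) :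
    DD t (2 ^ m + j) x = DD t (2 ^ m) x + rho t m x * DD t j x := by
  unfold DD
  rw [Finset.sum_range_add, Finset.mul_sum]
  congr 1
  apply Finset.sum_congr rfl
  intro k hk
  simp only [Finset.mem_range] at hk
  unfold VV rho
  rw [walsh_add m k (by omega), walsh_add m k (by omega)]
  ring

lemma SS_add (t x : ℝ) (m j : ℕ) (h : j ≤ 2 ^ m) :
    SS t (2 ^ m + j) x = SS t (2 ^ m) x + j * DD t (2 ^ m) x + rho t m x * SS t j x := by
  induction j with
  | zero => simp [SS, DD]
  | succ j ih =>
    have e1 : ∀ n, SS t (n+1) x = SS t n x + DD t (n+1) x := fun n => Finset.sum_range_succ _ _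
    rw [← add_assoc, e1, e1, ih (by omega), add_assoc (2 ^ m) j 1, DD_add t x m (j+1) h]
    push_cast; ring

lemma rho_sq (t : ℝ) (m : ℕ) (x : ℝ) : rho t m x = 1 ∨ rho t m x = -1 := by
  unfold rho
  rcases rad_sq m x with h | h <;> rcases rad_sq m t with h' | h' <;> simp [h, h']

lemma DD_nonneg (t x : ℝ) (m : ℕ) : 0 ≤ DD t (2 ^ m) x := by
  induction m with
  | zero => simp [DD, VV, walsh]
  | succ m ih =>
    rw [pow_succ, mul_two, DD_add t x m _ le_rfl]
    rcases rho_sq t m x with h | h <;> rw [h] <;> linarith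

lemma r0_meas : Measurable r0 := by
  have := rad_meas 0
  have h : rademacher 0 = r0 := by funext x; simp [rademacher]
  rwa [h] at this

lemma block_int (h : ℤ → ℝ) (N : ℕ) :
    IntervalIntegrable (fun y : ℝ => h ⌊y⌋ * r0 y) volume N ((N+1 : ℕ) : ℝ) ∧
    ∫ y in (N:ℝ)..((N+1 : ℕ) : ℝ), h ⌊y⌋ * r0 y = 0 := by
  have hA : Set.EqOn (fun y : ℝ => h ⌊y⌋ * r0 y) (fun _ => h N) (Set.Ico (N:ℝ) (N + 1/2)) := by
    intro y hy
    have hf : ⌊y⌋ = (N:ℤ) := by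
      rw [Int.floor_eq_iff]; push_cast; constructor <;> linarith [hy.1, hy.2]
    have : Int.fract y < 1/2 := by
      unfold Int.fract; rw [hf]; push_cast; linarith [hy.2]
    simp only [r0, hf, if_pos this, mul_one]
  have hB : Set.EqOn (fun y : ℝ => h ⌊y⌋ * r0 y) (fun _ => - h N)
      (Set.Ico (N + 1/2:ℝ) ((N+1:ℕ):ℝ)) := by
    intro y hy
    have h2 := hy.2
    push_cast at h2
    have hf : ⌊y⌋ = (N:ℤ) := by
      rw [Int.floor_eq_iff]; push_cast; constructor <;> linarith [hy.1]
    have : ¬ Int.fract y < 1/2 := by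
      unfold Int.fract; rw [hf]; push_cast; linarith [hy.1]
    simp only [r0, hf, if_neg this, mul_neg, mul_one]
  have le1 : (N:ℝ) ≤ N + 1/2 := by linarith
  have le2 : (N + 1/2:ℝ) ≤ ((N+1:ℕ):ℝ) := by push_cast; linarith
  have iA : IntervalIntegrable (fun y : ℝ => h ⌊y⌋ * r0 y) volume N (N+1/2) := by
    rw [intervalIntegrable_iff_integrableOn_Ico_of_le le1]
    exact (integrableOn_congr_fun hA measurableSet_Ico).2 (by simp)
  have iB : IntervalIntegrable (fun y : ℝ => h ⌊y⌋ * r0 y) volume (N+1/2) ((N+1:ℕ):ℝ) := by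
    rw [intervalIntegrable_iff_integrableOn_Ico_of_le le2]
    exact (integrableOn_congr_fun hB measurableSet_Ico).2 (by simp)
  refine ⟨iA.trans iB, ?_⟩
  rw [← intervalIntegral.integral_add_adjacent_intervals iA iB,
    intervalIntegral.integral_of_le le1, intervalIntegral.integral_of_le le2,
    ← integral_Ico_eq_integral_Ioc, ← integral_Ico_eq_integral_Ioc,
    setIntegral_congr_fun measurableSet_Ico hA, setIntegral_congr_fun measurableSet_Ico hB]
  have le3 : (0:ℝ) ≤ N + 1 - (N + 1/2) := by linarith
  simp only [setIntegral_const, Measure.real, Real.volume_Ico, Nat.cast_add, Nat.cast_one, smul_eq_mul]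
  rw [ENNReal.toReal_ofReal (by linarith), ENNReal.toReal_ofReal le3]
  ring

lemma zero_mean (h : ℤ → ℝ) (m : ℕ) :
    ∫ x, h ⌊(2:ℝ) ^ m * x⌋ * rademacher m x ∂unitMeasure = 0 := by
  unfold unitMeasure rademacher
  rw [integral_Ico_eq_integral_Ioc, ← intervalIntegral.integral_of_le zero_le_one,
    intervalIntegral.integral_comp_mul_left (fun y => h ⌊y⌋ * r0 y) (by positivity)]
  have := intervalIntegral.sum_integral_adjacent_intervals (f := fun y : ℝ => h ⌊y⌋ * r0 y)
    (μ := volume) (a := fun k : ℕ => (k:ℝ)) (n := 2 ^ m) (fun k _ => (block_int h k).1)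
  rw [Finset.sum_eq_zero (fun k _ => (block_int h k).2)] at this
  push_cast at this
  simp only [mul_zero, mul_one]
  rw [← this]; simp

lemma DD_meas (t : ℝ) (n : ℕ) : Measurable (DD t n) := by
  unfold DD VV
  exact Finset.measurable_fun_sum _ fun k _ => (walsh_meas k).mul_const _

lemma SS_meas (t : ℝ) (n : ℕ) : Measurable (SS t n) := by
  unfold SS
  exact Finset.measurable_fun_sum _ fun k _ => DD_meas t k

instance : IsFiniteMeasure unitMeasure := by unfold unitMeasure; infer_instance

lemma DD_int (t : ℝ) (n : ℕ) : Integrable (DD t n) unitMeasure := by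
  unfold DD VV
  refine integrable_finsetSum _ fun k _ => Integrable.mul_const ?_ _
  refine Integrable.of_bound (walsh_meas k).aestronglyMeasurable 1 ?_
  exact Eventually.of_forall fun x => by rw [Real.norm_eq_abs, walsh_abs]

lemma SS_int (t : ℝ) (n : ℕ) : Integrable (SS t n) unitMeasure :=
  integrable_finsetSum _ fun k _ => DD_int t k

lemma rho_meas (t : ℝ) (m : ℕ) : Measurable (rho t m) := (rad_meas m).mul_const _

lemma rho_int (t : ℝ) (m : ℕ) {g : ℝ → ℝ} (hg : Integrable g unitMeasure) :
    Integrable (fun x => rho t m x * g x) unitMeasure := by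
  refine hg.bdd_mul (c := 1) (rho_meas t m).aestronglyMeasurable ?_
  exact Eventually.of_forall fun x => by
    rcases rho_sq t m x with h | h <;> simp [h]

lemma zero_mean' (t : ℝ) (m : ℕ) (g : ℝ → ℝ)
    (hg : ∀ x y, ⌊(2:ℝ) ^ m * x⌋ = ⌊(2:ℝ) ^ m * y⌋ → g x = g y) :
    ∫ x, rho t m x * g x ∂unitMeasure = 0 := by
  have := zero_mean (fun z => g (z / 2 ^ m)) m
  have e : ∀ x, rho t m x * g x =
      rademacher m t * (g (⌊(2:ℝ) ^ m * x⌋ / 2 ^ m) * rademacher m x) := by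
    intro x
    rw [hg x (⌊(2:ℝ) ^ m * x⌋ / 2 ^ m)]
    · unfold rho; ring
    · rw [mul_div_cancel₀ _ (by positivity)]; simp
  simp_rw [e]
  rw [integral_const_mul, this, mul_zero]

lemma DD_dep (t : ℝ) {m n : ℕ} (h : n ≤ 2 ^ m) {x y : ℝ}
    (hxy : ⌊(2:ℝ) ^ m * x⌋ = ⌊(2:ℝ) ^ m * y⌋) : DD t n x = DD t n y := by
  unfold DD VV
  refine Finset.sum_congr rfl fun k hk => ?_
  simp only [Finset.mem_range] at hk
  rw [walsh_dep (by omega) hxy]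

lemma SS_dep (t : ℝ) {m n : ℕ} (h : n ≤ 2 ^ m) {x y : ℝ}
    (hxy : ⌊(2:ℝ) ^ m * x⌋ = ⌊(2:ℝ) ^ m * y⌋) : SS t n x = SS t n y := by
  unfold SS
  refine Finset.sum_congr rfl fun k hk => ?_
  simp only [Finset.mem_range] at hk
  rw [DD_dep t (by omega) hxy]

lemma integral_one_unit : ∫ _x, (1:ℝ) ∂unitMeasure = 1 := by simp [unitMeasure]

lemma walsh_zero (x : ℝ) : walsh 0 x = 1 := by simp [walsh]

lemma DD_integral (t : ℝ) (m : ℕ) : ∫ x, DD t (2 ^ m) x ∂unitMeasure = 1 := by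
  induction m with
  | zero => simpa [DD, VV, walsh_zero] using integral_one_unit
  | succ m ih =>
    simp_rw [pow_succ, mul_two, DD_add t _ m _ le_rfl]
    rw [integral_add (DD_int _ _) (rho_int _ _ (DD_int _ _)), ih,
      zero_mean' t m _ (fun x y => DD_dep t le_rfl), add_zero]

lemma SS_pow (t : ℝ) (m : ℕ) : ∫ x, |SS t (2 ^ m) x| ∂unitMeasure ≤ 2 ^ m := by
  induction m with
  | zero => simpa [SS, DD, VV, walsh_zero, Finset.sum_range_succ] using integral_one_unit.le
  | succ m ih =>
    have hp : ∀ x, |SS t (2 ^ (m+1)) x| ≤ (|SS t (2 ^ m) x| + rho t m x * |SS t (2 ^ m) x|)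
        + 2 ^ m * DD t (2 ^ m) x := by
      intro x
      rw [pow_succ, mul_two, SS_add t x m _ le_rfl]
      have h0 := DD_nonneg t x m
      have h1 : (0:ℝ) ≤ 2 ^ m * DD t (2 ^ m) x := by positivity
      have h2 : |SS t (2 ^ m) x + rho t m x * SS t (2 ^ m) x|
          = |SS t (2 ^ m) x| + rho t m x * |SS t (2 ^ m) x| := by
        rcases rho_sq t m x with h | h <;> rw [h]
        · rw [one_mul, one_mul, ← two_mul, abs_mul]; norm_num; ring
        · simp
      rw [← h2]
      have h3 := abs_add_le (SS t (2 ^ m) x + rho t m x * SS t (2 ^ m) x) (2 ^ m * DD t (2 ^ m) x)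
      rw [abs_of_nonneg h1] at h3
      refine le_trans (le_of_eq ?_) h3
      congr 1; push_cast; ring
    have hi := (SS_int t (2 ^ m)).abs
    have hi2 := rho_int t m hi
    refine (integral_mono (SS_int t _).abs
      ((hi.add hi2).add ((DD_int t _).const_mul _)) hp).trans ?_
    have e1 := integral_add (hi.add hi2) ((DD_int t (2^m)).const_mul (2 ^ m))
    have e2 := integral_add hi hi2
    simp only [Pi.add_apply] at e1 ⊢
    rw [e1, e2, integral_const_mul, DD_integral, zero_mean' t m (fun x => |SS t (2^m) x|)
      (fun x y h => congrArg abs (SS_dep t le_rfl h)), pow_succ]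
    linarith

lemma SS_bound (t : ℝ) (n : ℕ) : ∫ x, |SS t n x| ∂unitMeasure ≤ 2 * n := by
  induction n using Nat.strong_induction_on with
  | _ n ih =>
  rcases Nat.eq_zero_or_pos n with rfl | hn
  · simp [SS, DD]
  obtain ⟨m, j, hj, rfl⟩ : ∃ m j, j < 2 ^ m ∧ n = 2 ^ m + j := by
    refine ⟨Nat.log 2 n, n - 2 ^ Nat.log 2 n, ?_, ?_⟩
    · have := Nat.lt_pow_succ_log_self (b := 2) (by norm_num) n
      rw [pow_succ] at this; have := Nat.pow_log_le_self 2 hn.ne'; omega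
    · have := Nat.pow_log_le_self 2 hn.ne'; omega
  have h2 : 0 < 2 ^ m := by positivity
  have hI := ih j (by omega)
  have hp : ∀ x, |SS t (2 ^ m + j) x| ≤ |SS t (2 ^ m) x| + j * DD t (2 ^ m) x + |SS t j x| := by
    intro x
    rw [SS_add t x m _ hj.le]
    have h0 := DD_nonneg t x m
    have h1 : (0:ℝ) ≤ j * DD t (2 ^ m) x := by positivity
    have h3 : |rho t m x * SS t j x| = |SS t j x| := by
      rcases rho_sq t m x with h | h <;> simp [h]
    refine (abs_add_three _ _ _).trans ?_
    rw [h3, abs_of_nonneg h1]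
  have hi := (SS_int t (2 ^ m)).abs
  have hi2 := (DD_int t (2^m)).const_mul (j:ℝ)
  have hi3 := (SS_int t j).abs
  refine (integral_mono (SS_int t _).abs ((hi.add hi2).add hi3) hp).trans ?_
  have e1 := integral_add (hi.add hi2) hi3
  have e2 := integral_add hi hi2
  simp only [Pi.add_apply] at e1 ⊢
  rw [e1, e2, integral_const_mul, DD_integral]
  have := SS_pow t m
  have hj' : (j:ℝ) ≤ 2 ^ m := by exact_mod_cast hj.le
  push_cast
  linarith

/-- twisted logarithmic kernel -/
def GG (n : ℕ) (t x : ℝ) : ℝ := (1 / logSum n) * ∑ i ∈ Finset.Ico 1 n, DD t i x / i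

lemma abel (t x : ℝ) (n : ℕ) : ∑ i ∈ Finset.Ico 1 (n+1), DD t i x / i =
    SS t n x / (n+1) + ∑ i ∈ Finset.Ico 1 (n+1), SS t i x / (i * (i+1)) := by
  induction n with
  | zero => simp [SS, DD]
  | succ n ih =>
    rw [Finset.sum_Ico_succ_top (b := n+1) (by omega), Finset.sum_Ico_succ_top (b := n+1) (by omega), ih]
    have e1 : SS t (n+1) x = SS t n x + DD t (n+1) x := Finset.sum_range_succ _ _
    rw [e1]
    push_cast
    have : (n:ℝ) + 1 ≠ 0 := by positivity
    have : (n:ℝ) + 1 + 1 ≠ 0 := by positivity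
    field_simp
    ring

lemma logSum_ge (n : ℕ) : 1 ≤ logSum (n+2) := by
  unfold logSum
  have : (1:ℝ) = ∑ k ∈ Finset.Icc (1:ℕ) 1, (1:ℝ) / (k:ℝ) := by simp
  refine this.le.trans ?_
  apply Finset.sum_le_sum_of_subset_of_nonneg
  · apply Finset.Icc_subset_Icc <;> omega
  · intros; positivity

lemma GG_int (n : ℕ) (t : ℝ) : Integrable (GG n t) unitMeasure := by
  unfold GG
  exact (integrable_finsetSum _ fun i _ => (DD_int t i).div_const _).const_mul _

lemma GG_bound (n : ℕ) (hn : 2 ≤ n) (t : ℝ) : ∫ x, |GG n t x| ∂unitMeasure ≤ 4 := by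
  obtain ⟨N, rfl⟩ : ∃ N, n = N + 2 := ⟨n - 2, by omega⟩
  have hl := logSum_ge N
  have hl0 : 0 < logSum (N+2) := by linarith
  have hp : ∀ x, |GG (N+2) t x| ≤ (1 / logSum (N+2)) * (|SS t (N+1) x| / ((N+1:ℕ)+1) +
      ∑ i ∈ Finset.Ico 1 (N+1+1), |SS t i x| / (i * (i+1))) := by
    intro x
    unfold GG
    rw [abel t x (N+1), abs_mul, abs_of_pos (by positivity : 0 < 1 / logSum (N+2))]
    gcongr
    refine (abs_add_le _ _).trans ?_
    gcongr
    · rw [abs_div, abs_of_pos (by positivity : (0:ℝ) < ((N+1:ℕ):ℝ)+1)]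
    · refine (Finset.abs_sum_le_sum_abs _ _).trans (Finset.sum_le_sum fun i _ => ?_)
      rw [abs_div, abs_of_nonneg (by positivity : (0:ℝ) ≤ (i:ℝ) * (i+1))]
  have hiA := (SS_int t (N+1)).abs.div_const (((N+1:ℕ):ℝ)+1)
  have hiB : ∀ i ∈ Finset.Ico 1 (N+1+1),
      Integrable (fun x => |SS t i x| / ((i:ℝ) * (i+1))) unitMeasure :=
    fun i _ => (SS_int t i).abs.div_const _
  have hiB' := integrable_finsetSum _ hiB
  refine (integral_mono (GG_int _ t).abs ((hiA.add hiB').const_mul _) hp).trans ?_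
  have e1 := integral_add hiA hiB'
  simp only [Pi.add_apply]
  rw [integral_const_mul, e1, integral_finsetSum _ hiB]
  simp_rw [integral_div]
  have b1 : (∫ x, |SS t (N+1) x| ∂unitMeasure) / (((N+1:ℕ):ℝ)+1) ≤ 2 := by
    rw [div_le_iff₀ (by positivity)]
    have := SS_bound t (N+1)
    linarith
  have b2 : ∑ i ∈ Finset.Ico 1 (N+1+1), (∫ x, |SS t i x| ∂unitMeasure) / ((i:ℝ) * (i+1)) ≤
      2 * logSum (N+2) := by
    unfold logSum
    rw [Finset.mul_sum]
    have : Finset.Icc 1 (N+2-1) = Finset.Ico 1 (N+1+1) := by ext; simp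
    rw [this]
    refine Finset.sum_le_sum fun i hi => ?_
    have hi1 : 1 ≤ i := (Finset.mem_Ico.1 hi).1
    have hi0 : (0:ℝ) < i := by exact_mod_cast hi1
    rw [div_le_iff₀ (by positivity)]
    have := SS_bound t i
    have e : 2 * (1 / (i:ℝ)) * (i * (i+1)) = 2 * i + 2 := by field_simp
    rw [e]; linarith
  rw [one_div, inv_mul_le_iff₀ hl0]
  linarith

lemma binDigit_cases (k : ℕ) (x : ℝ) : binDigit k x = 0 ∨ binDigit k x = 1 := by
  unfold binDigit; omega

lemma bin_rad (k : ℕ) (x : ℝ) (hx : 0 ≤ x) :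
    rademacher k x = 1 - 2 * (binDigit k x : ℝ) := by
  rw [rad_eq]
  have h0 : 0 ≤ ⌊(2:ℝ) ^ (k+1) * x⌋ := Int.floor_nonneg.2 (by positivity)
  have hb : binDigit k x = (⌊(2:ℝ) ^ (k+1) * x⌋).toNat % 2 := by
    unfold binDigit; rw [mul_comm]
  generalize ⌊(2:ℝ) ^ (k+1) * x⌋ = z at *
  split_ifs with h
  · have : binDigit k x = 0 := by omega
    rw [this]; norm_num
  · have : binDigit k x = 1 := by omega
    rw [this]; norm_num

def TT (d : ℕ → ℝ) : ℝ := ∑' k : ℕ, d k / 2 ^ (k+1)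

lemma geo_hasSum : HasSum (fun k : ℕ => (1:ℝ) / 2 ^ (k+1)) 1 := by
  have := hasSum_geometric_two' (1:ℝ)
  convert this using 2 with k
  rw [pow_succ]; field_simp

lemma TT_summable {d : ℕ → ℝ} (hd : ∀ k, d k = 0 ∨ d k = 1) :
    Summable (fun k : ℕ => d k / 2 ^ (k+1)) := by
  refine Summable.of_nonneg_of_le (fun k => ?_) (fun k => ?_) geo_hasSum.summable
  · rcases hd k with h | h <;> rw [h] <;> positivity
  · rcases hd k with h | h <;> rw [h] <;> gcongr; norm_num

lemma TT_shift {d : ℕ → ℝ} (hd : ∀ k, d k = 0 ∨ d k = 1) :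
    2 * TT d = d 0 + TT (fun k => d (k+1)) := by
  unfold TT
  rw [(TT_summable hd).tsum_eq_zero_add, mul_add, ← tsum_mul_left]
  congr 1
  · simp; ring
  · apply tsum_congr
    intro k
    rw [pow_succ _ (k+1)]; field_simp

lemma TT_nonneg {d : ℕ → ℝ} (hd : ∀ k, d k = 0 ∨ d k = 1) : 0 ≤ TT d :=
  tsum_nonneg fun k => by rcases hd k with h | h <;> rw [h] <;> positivity

lemma TT_lt {d : ℕ → ℝ} (hd : ∀ k, d k = 0 ∨ d k = 1) (hj : ∃ j, d j = 0) : TT d < 1 := by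
  obtain ⟨j, hj⟩ := hj
  rw [← geo_hasSum.tsum_eq]
  refine Summable.tsum_lt_tsum (i := j) (fun k => ?_) ?_ (TT_summable hd) geo_hasSum.summable
  · rcases hd k with h | h <;> rw [h] <;> gcongr; norm_num
  · rw [hj]; simp

lemma rad_TT (k : ℕ) : ∀ {d : ℕ → ℝ}, (∀ k, d k = 0 ∨ d k = 1) → (∀ K, ∃ j, K ≤ j ∧ d j = 0) →
    rademacher k (TT d) = 1 - 2 * d k := by
  induction k with
  | zero =>
    intro d hd hj
    have h1 := TT_shift hd
    have hs : ∀ k, d (k+1) = 0 ∨ d (k+1) = 1 := fun k => hd _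
    have h2 := TT_nonneg hs
    have h3 := TT_lt hs (by
      obtain ⟨j, hj1, hj2⟩ := hj 1
      exact ⟨j - 1, by rwa [Nat.sub_add_cancel hj1]⟩)
    have hf : Int.fract (TT d) = TT d := by
      rw [Int.fract_eq_self]
      rcases hd 0 with h | h <;> rw [h] at h1 <;> constructor <;> linarith
    simp only [rademacher, r0, pow_zero, one_mul, hf]
    rcases hd 0 with h | h <;> rw [h] at h1 ⊢
    · rw [if_pos (by linarith)]; norm_num
    · rw [if_neg (by linarith)]; norm_num
  | succ k ih =>
    intro d hd hj
    have h1 := TT_shift hd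
    rw [← ih (d := fun k => d (k+1)) (fun k => hd _) (fun K => by
      obtain ⟨j, hj1, hj2⟩ := hj (K+1)
      exact ⟨j - 1, by omega, by simpa [Nat.sub_add_cancel (show 1 ≤ j by omega)] using hj2⟩)]
    have e : (2:ℝ) ^ (k+1) * TT d = 2 ^ k * TT (fun k => d (k+1)) + 2 ^ k * d 0 := by
      rw [pow_succ, mul_assoc, h1]; ring
    unfold rademacher r0
    rw [e]
    have : Int.fract ((2:ℝ) ^ k * TT (fun k => d (k+1)) + 2 ^ k * d 0) =
        Int.fract ((2:ℝ) ^ k * TT (fun k => d (k+1))) := by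
      rcases hd 0 with h | h <;> rw [h]
      · simp
      · have := Int.fract_add_natCast ((2:ℝ) ^ k * TT (fun k => d (k+1))) (2 ^ k)
        push_cast at this
        rw [mul_one, this]
    rw [this]

/-- exceptional set -/
def badSet (x : ℝ) : Set ℝ := {t | 0 ≤ t ∧ ∃ K, ∀ k, K ≤ k → binDigit k t ≠ binDigit k x}

lemma floor_step (t : ℝ) (ht : 0 ≤ t) (j : ℕ) :
    ⌊(2:ℝ) ^ (j+1) * t⌋ = 2 * ⌊(2:ℝ) ^ j * t⌋ + binDigit j t := by
  have h0 : 0 ≤ ⌊(2:ℝ) ^ (j+1) * t⌋ := Int.floor_nonneg.2 (by positivity)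
  have hb : binDigit j t = (⌊(2:ℝ) ^ (j+1) * t⌋).toNat % 2 := by
    unfold binDigit; rw [mul_comm]
  have h2 : ⌊(2:ℝ) ^ j * t⌋ = ⌊(2:ℝ) ^ (j+1) * t⌋ / ((2:ℕ):ℤ) := by
    rw [← Int.floor_div_natCast]
    congr 1; rw [pow_succ]; push_cast; field_simp
  omega

lemma badSet_countable (x : ℝ) : (badSet x).Countable := by
  have : badSet x = ⋃ K : ℕ, {t | 0 ≤ t ∧ ∀ k, K ≤ k → binDigit k t ≠ binDigit k x} := by
    ext t; simp [badSet]
  rw [this]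
  refine Set.countable_iUnion fun K => ?_
  refine Set.MapsTo.countable_of_injOn (f := fun t : ℝ => ⌊(2:ℝ) ^ K * t⌋) (Set.mapsTo_univ _ _)
    ?_ Set.countable_univ
  rintro s ⟨hs0, hs⟩ t ⟨ht0, ht⟩ hst
  simp only at hst
  have key : ∀ j, ⌊(2:ℝ) ^ (K+j) * s⌋ = ⌊(2:ℝ) ^ (K+j) * t⌋ := by
    intro j
    induction j with
    | zero => exact hst
    | succ j ih =>
      rw [← add_assoc, floor_step s hs0, floor_step t ht0, ih]
      have h1 := hs (K+j) (by omega)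
      have h2 := ht (K+j) (by omega)
      have c1 := binDigit_cases (K+j) s
      have c2 := binDigit_cases (K+j) t
      have c3 := binDigit_cases (K+j) x
      have : binDigit (K+j) s = binDigit (K+j) t := by omega
      rw [this]
  have hd : ∀ j : ℕ, (2:ℝ) ^ j * |s - t| < 1 := by
    intro j
    have h1 := Int.abs_sub_lt_one_of_floor_eq_floor (key j)
    rw [← mul_sub, abs_mul, abs_of_pos (by positivity : (0:ℝ) < 2 ^ (K+j))] at h1
    refine lt_of_le_of_lt ?_ h1
    gcongr
    · norm_num
    · omega
  by_contra hne
  have hpos : 0 < |s - t| := abs_pos.2 (sub_ne_zero.2 hne)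
  obtain ⟨j, hj⟩ := pow_unbounded_of_one_lt (1 / |s - t|) (by norm_num : (1:ℝ) < 2)
  rw [div_lt_iff₀ hpos] at hj
  linarith [hd j]

lemma rad_dyadicAdd (k : ℕ) {x t : ℝ} (hx : 0 ≤ x) (ht : 0 ≤ t) (hb : t ∉ badSet x) :
    rademacher k (dyadicAdd x t) = rademacher k x * rademacher k t := by
  have e : dyadicAdd x t = TT (fun k => |(binDigit k x : ℝ) - (binDigit k t : ℝ)|) := rfl
  rw [e, rad_TT k, bin_rad k x hx, bin_rad k t ht]
  · rcases binDigit_cases k x with h | h <;> rcases binDigit_cases k t with h' | h' <;>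
      rw [h, h'] <;> norm_num
  · intro k
    rcases binDigit_cases k x with h | h <;> rcases binDigit_cases k t with h' | h' <;>
      rw [h, h'] <;> norm_num
  · intro K
    by_contra! hcon
    refine hb ⟨ht, K, fun k hk heq => hcon k hk ?_⟩
    rw [heq]; simp

lemma walsh_dyadicAdd (n : ℕ) {x t : ℝ} (hx : 0 ≤ x) (ht : 0 ≤ t) (hb : t ∉ badSet x) :
    walsh n (dyadicAdd x t) = walsh n x * walsh n t := by
  unfold walsh
  rw [← Finset.prod_mul_distrib]
  refine Finset.prod_congr rfl fun k _ => ?_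
  split_ifs
  · exact rad_dyadicAdd k hx ht hb
  · simp

lemma GKernel_dyadicAdd (n : ℕ) {x t : ℝ} (hx : 0 ≤ x) (ht : 0 ≤ t) (hb : t ∉ badSet x) :
    GKernel n (dyadicAdd x t) = GG n t x := by
  unfold GKernel GG DD VV dirichletKernel
  simp_rw [walsh_dyadicAdd _ hx ht hb]

lemma conv_eq (n : ℕ) (f : ℝ → ℝ) {x : ℝ} (hx : 0 ≤ x) :
    dyadicConv f (GKernel n) x = ∫ t, f t * GG n t x ∂unitMeasure := by
  unfold dyadicConv unitMeasure
  refine integral_congr_ae ?_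
  have h1 : ∀ᵐ t ∂(volume.restrict (Set.Ico (0:ℝ) 1)), t ∉ badSet x :=
    ae_restrict_of_ae ((badSet_countable x).ae_notMem volume)
  filter_upwards [h1, ae_restrict_mem measurableSet_Ico] with t ht ht2
  rw [GKernel_dyadicAdd n hx ht2.1 ht]

lemma GG_meas (n : ℕ) : Measurable (fun p : ℝ × ℝ => GG n p.2 p.1) := by
  unfold GG DD VV
  refine Measurable.const_mul ?_ _
  refine Finset.measurable_fun_sum _ fun i _ => Measurable.div_const ?_ _
  refine Finset.measurable_fun_sum _ fun k _ => ?_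
  exact ((walsh_meas k).comp measurable_fst).mul ((walsh_meas k).comp measurable_snd)

/-- the Riesz logarithmic means `f ↦ f ∗ G_n` are uniformly of strong type
`(1,1)` on `[0,1)`. -/
theorem stmt17 : ∃ C > (0:ℝ), ∀ n : ℕ, 2 ≤ n → ∀ f : ℝ → ℝ, Measurable f →
    Integrable f unitMeasure →
    ∫⁻ x, ENNReal.ofReal |dyadicConv f (GKernel n) x| ∂unitMeasure ≤
      ENNReal.ofReal (C * ∫ x, |f x| ∂unitMeasure) := by
  refine ⟨4, by norm_num, fun n hn f hf hfi => ?_⟩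
  have hm : Measurable (fun p : ℝ × ℝ => ‖f p.2 * GG n p.2 p.1‖ₑ) :=
    ((hf.comp measurable_snd).mul (GG_meas n)).enorm
  calc ∫⁻ x, ENNReal.ofReal |dyadicConv f (GKernel n) x| ∂unitMeasure
      ≤ ∫⁻ x, ∫⁻ t, ‖f t * GG n t x‖ₑ ∂unitMeasure ∂unitMeasure := by
        refine lintegral_mono_ae ?_
        have h2 : ∀ᵐ x ∂unitMeasure, x ∈ Set.Ico (0:ℝ) 1 := ae_restrict_mem measurableSet_Ico
        filter_upwards [h2] with x hx
        rw [conv_eq n f hx.1, ← Real.enorm_eq_ofReal_abs]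
        exact enorm_integral_le_lintegral_enorm _
    _ = ∫⁻ t, ∫⁻ x, ‖f t * GG n t x‖ₑ ∂unitMeasure ∂unitMeasure :=
        lintegral_lintegral_swap hm.aemeasurable
    _ ≤ ∫⁻ t, ENNReal.ofReal 4 * ‖f t‖ₑ ∂unitMeasure := by
        refine lintegral_mono fun t => ?_
        simp_rw [enorm_mul]
        rw [lintegral_const_mul' _ _ enorm_ne_top, mul_comm]
        gcongr
        rw [← ofReal_integral_norm_eq_lintegral_enorm (GG_int n t)]
        exact ENNReal.ofReal_le_ofReal (GG_bound n hn t)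
    _ = ENNReal.ofReal (4 * ∫ x, |f x| ∂unitMeasure) := by
        rw [lintegral_const_mul' _ _ ENNReal.ofReal_ne_top,
          ← ofReal_integral_norm_eq_lintegral_enorm hfi, ENNReal.ofReal_mul (by norm_num)]
        rfl

end
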